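/- Case 2 of the meeting-point analysis: in a rooted tree, if q is an ancestor of u but q is not an ancestor of v, then the median of u, v, q equals q. -/

import Mathlib

/-- `m` lies on the path from `a` to `b` in the graph `G`. -/
def onPath {V : Type*} (G : SimpleGraph V) (a m b : V) : Prop :=
  G.dist a m + G.dist m b = G.dist a b

/-- `m` is a median of the vertices `u`, `v`, `w`: it lies on the path from `u` to `v`,
on the path from `u` to `w`, and on the path from `v` to `w`. -/
def isMedian {V : Type*} (G : SimpleGraph V) (m u v w : V) : Prop :=
  onPath G u m v ∧ onPath G u m w ∧ onPath G v m w

/-- `u` is an ancestor of `v` with respect to the root `r`: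
`u` lies on the path from `r` to `v`. -/
def isAncestor {V : Type*} (G : SimpleGraph V) (r u v : V) : Prop :=
  onPath G r u v

/-- `l` is a lowest common ancestor of `u` and `v` with respect to the root `r`. -/
def isLCA {V : Type*} (G : SimpleGraph V) (r l u v : V) : Prop :=
  isAncestor G r l u ∧ isAncestor G r l v ∧
    ∀ a : V, isAncestor G r a u → isAncestor G r a v → isAncestor G r a l

/-!
Suppose `m ≠ q`. The path from `r` to `u` passes through `q` and then `m`, and the path from `q` to
`v` also passes through `m`. So the paths from `r` to `m` and from `q` to `v` overlap in the
nontrivial path from `q` to `m`. In a tree a walk is a path as soon as it never backtracks, which is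
a local condition, so the two glue to a path from `r` to `v` through `q`: `q` is an ancestor of `v`.
-/

section

variable {V : Type*} {G : SimpleGraph V} {a b c d : V}

theorem length_eq_dist_of_isPath (hG : G.IsAcyclic) {p : G.Walk a b} (hp : p.IsPath) :
    p.length = G.dist a b := by
  obtain ⟨q, hq, hq_length⟩ := p.reachable.exists_path_of_dist
  have hpq : p = q := congrArg Subtype.val ((hG.subsingleton_path a b).elim ⟨p, hp⟩ ⟨q, hq⟩)
  rw [hpq, hq_length]

theorem isPath_append_append (hG : G.IsAcyclic) {p : G.Walk a b} {q : G.Walk b c} {s : G.Walk c d}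
    (hpq : (p.append q).IsPath) (hqs : (q.append s).IsPath) (hq : ¬q.Nil) :
    (p.append (q.append s)).IsPath := by
  rw [hG.isPath_iff_isChain, SimpleGraph.Walk.edges_append] at hpq hqs ⊢
  rw [SimpleGraph.Walk.edges_append, ← List.append_assoc]
  exact hpq.append_overlap hqs (SimpleGraph.Walk.edges_eq_nil.not.mpr hq)

theorem onPath_iff_isPath_append (hG : G.IsAcyclic) {p : G.Walk a b} {q : G.Walk b c}
    (hp : p.IsPath) (hq : q.IsPath) : onPath G a b c ↔ (p.append q).IsPath := by
  have hlength : (p.append q).length = G.dist a b + G.dist b c := by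
    rw [SimpleGraph.Walk.length_append, length_eq_dist_of_isPath hG hp,
      length_eq_dist_of_isPath hG hq]
  rw [onPath, ← hlength]
  exact ⟨SimpleGraph.Walk.isPath_of_length_eq_dist _, length_eq_dist_of_isPath hG⟩

namespace onPath

theorem symm (h : onPath G a b c) : onPath G c b a := by
  rw [onPath, G.dist_comm (u := c) (v := b), G.dist_comm (u := b) (v := a),
    G.dist_comm (u := c) (v := a), add_comm]
  exact h

theorem trans_right_left (hG : G.Connected) (hb : onPath G a b d) (hc : onPath G b c d) :
    onPath G a b c := by
  have habc : G.dist a c ≤ G.dist a b + G.dist b c := hG.dist_triangle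
  have hacd : G.dist a d ≤ G.dist a c + G.dist c d := hG.dist_triangle
  unfold onPath at *
  lia

theorem trans_expand_left (hG : G.IsTree) (hb : onPath G a b c) (hc : onPath G b c d)
    (hbc : b ≠ c) : onPath G a b d := by
  obtain ⟨p, hp, -⟩ := hG.connected.exists_path_of_dist a b
  obtain ⟨q, hq, -⟩ := hG.connected.exists_path_of_dist b c
  obtain ⟨s, hs, -⟩ := hG.connected.exists_path_of_dist c d
  have hpq : (p.append q).IsPath := (onPath_iff_isPath_append hG.isAcyclic hp hq).mp hb
  have hqs : (q.append s).IsPath := (onPath_iff_isPath_append hG.isAcyclic hq hs).mp hc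
  exact (onPath_iff_isPath_append hG.isAcyclic hp hqs).mpr
    (isPath_append_append hG.isAcyclic hpq hqs (SimpleGraph.Walk.not_nil_of_ne hbc))

end onPath

theorem median_case2_general (hG : G.IsTree) {r u v q m : V}
    (hqu : isAncestor G r q u) (hqv : ¬isAncestor G r q v)
    (hmu : onPath G u m q) (hmv : onPath G v m q) : m = q := by
  by_contra hne
  have hqm : isAncestor G r q m := onPath.trans_right_left hG.connected hqu hmu.symm
  exact hqv (onPath.trans_expand_left hG hqm hmv.symm (Ne.symm hne))

end

/-- Case 2: if `q` is an ancestor of `u` but not of `v`, then the median of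
`u`, `v`, `q` equals `q`. -/
theorem median_case2 {V : Type*} [Fintype V] (G : SimpleGraph V)
    (hG : G.IsTree) (r u v q : V)
    (hqu : isAncestor G r q u) (hqv : ¬ isAncestor G r q v) :
    ∀ m : V, isMedian G m u v q → m = q :=
  fun _ ⟨_, hmu, hmv⟩ ↦ median_case2_general hG hqu hqv hmu hmv
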